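/- (Operator Diaz–Metcalf type inequality, second case.) Let Φ be a positive linear map from n×n to m×m complex matrices, let f : ℝ → ℝ be operator monotone on [0,∞), and let A, B be positive definite n×n complex matrices with s·A ≤ B ≤ t·A for some scalars 0 < s ≤ t with √(st) ≤ 1. Then (Φ(f(√(st)·A)) + Φ(f(B)))/2 ≤ ((√s+√t)²/(4√(st)))·Φ(f(A ! B)). -/

import Mathlib

open Matrix ComplexOrder

/-- Loewner order: `A ≤ B` iff `B - A` is positive semidefinite. -/
def LoewnerLE {n : Type} [Fintype n] (A B : Matrix n n ℂ) : Prop := (B - A).PosSemidef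

/-- The positive square root of a (Hermitian) matrix, via the continuous functional calculus. -/
noncomputable def msqrt {n : Type} [Fintype n] [DecidableEq n] (A : Matrix n n ℂ) :
    Matrix n n ℂ := cfc Real.sqrt A

/-- The arithmetic mean `A ∇ B = (A + B)/2`. -/
noncomputable def amean {n : Type} [Fintype n] [DecidableEq n] (A B : Matrix n n ℂ) :
    Matrix n n ℂ := (2 : ℝ)⁻¹ • (A + B)

/-- The harmonic mean `A ! B = ((A⁻¹ + B⁻¹)/2)⁻¹`. -/
noncomputable def hmean {n : Type} [Fintype n] [DecidableEq n] (A B : Matrix n n ℂ) :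
    Matrix n n ℂ := ((2 : ℝ)⁻¹ • (A⁻¹ + B⁻¹))⁻¹

/-- The geometric mean `A ♯ B = A^(1/2) (A^(-1/2) B A^(-1/2))^(1/2) A^(1/2)`. -/
noncomputable def gmean {n : Type} [Fintype n] [DecidableEq n] (A B : Matrix n n ℂ) :
    Matrix n n ℂ := msqrt A * msqrt ((msqrt A)⁻¹ * B * (msqrt A)⁻¹) * msqrt A

/-- `f : ℝ → ℝ` is operator monotone on `[0,∞)`: it is continuous and nonnegative on `[0,∞)`
and monotone on positive-semidefinite complex matrices of every finite size, with `f` applied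
via the continuous functional calculus. -/
def OpMonotone (f : ℝ → ℝ) : Prop :=
  ContinuousOn f (Set.Ici 0) ∧ (∀ x : ℝ, 0 ≤ x → 0 ≤ f x) ∧
    ∀ (k : Type) [Fintype k] [DecidableEq k] (X Y : Matrix k k ℂ),
      X.PosSemidef → LoewnerLE X Y → LoewnerLE (cfc f X) (cfc f Y)

/-- `g : ℝ → ℝ` is operator monotone decreasing on `(0,∞)`: it is continuous and nonnegative on
`(0,∞)` and antitone on positive-definite complex matrices of every finite size, with `g` applied
via the continuous functional calculus. -/
def OpAntitone (g : ℝ → ℝ) : Prop :=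
  ContinuousOn g (Set.Ioi 0) ∧ (∀ x : ℝ, 0 < x → 0 ≤ g x) ∧
    ∀ (k : Type) [Fintype k] [DecidableEq k] (X Y : Matrix k k ℂ),
      X.PosDef → Y.PosDef → LoewnerLE X Y → LoewnerLE (cfc g Y) (cfc g X)

/-!
Rotating `X ⊕ Y` by a unitary with scalar blocks puts `a • X + b • Y` in a corner. Up to an
arbitrarily small `ε` in that corner the rotated matrix is dominated by a block diagonal one, so
monotonicity of `f` on `2n × 2n` matrices makes `f` concave on `n × n` matrices; as `f 0 ≥ 0`,
also `f (c • X) ≤ c • f X` for `c ≥ 1`.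

With `g = √(s * t)` and `c = (√s + √t) ^ 2 / (4 * g)` this reduces the theorem to the Kantorovich
bound `amean (g • A) B ≤ c • hmean (g • A) B`, because `g ≤ 1` gives
`hmean (g • A) B ≤ hmean A B`. The Kantorovich bound follows by estimating
`(A + B) * (A⁻¹ + B⁻¹) * (A + B)`: if `p • B ≤ A ≤ q • B`, then `A - p • B` and `q • B - A` are
nonnegative and commute after conjugation by the square root of `B⁻¹`, so their product with `B⁻¹`
in between is nonnegative, which bounds `A * B⁻¹ * A`.
-/

section

open scoped MatrixOrder Matrix.Norms.L2Operator
open Filter Topology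

theorem exists_polynomial_eqOn_eval {F : Type*} [Field F] (f : F → F) {S : Set F}
    (hS : S.Finite) : ∃ p : Polynomial F, S.EqOn f (fun x ↦ p.eval x) := by
  classical
  exact ⟨Lagrange.interpolate hS.toFinset id f, fun _ hx ↦
    (Lagrange.eval_interpolate_at_node f (Set.injOn_id _) (hS.mem_toFinset.2 hx)).symm⟩

theorem continuousOn_cfc_Ici {A : Type*} [CStarAlgebra A] [PartialOrder A] [StarOrderedRing A]
    {f : ℝ → ℝ} (hf : ContinuousOn f (Set.Ici 0)) :
    ContinuousOn (cfc f) (Set.Ici (0 : A)) := by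
  have hext : ContinuousOn (fun X ↦ cfc (fun x ↦ f (max x 0)) X) (Set.Ici (0 : A)) :=
    ContinuousOn.cfc_of_mem_nhdsSet _ (s := Set.univ) univ_mem continuousOn_id
      (fun X hX ↦ IsSelfAdjoint.of_nonneg hX)
      (hf.comp (by fun_prop) fun x _ ↦ le_max_right x 0)
  refine hext.congr fun X hX ↦ cfc_congr fun x hx ↦ ?_
  simp [max_eq_left (spectrum_nonneg_of_nonneg hX hx)]

section Blocks

theorem toBlocks₁₁_mono {𝕜 m n : Type*} [RCLike 𝕜] {M N : Matrix (m ⊕ n) (m ⊕ n) 𝕜} (h : M ≤ N) :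
    M.toBlocks₁₁ ≤ N.toBlocks₁₁ :=
  PosSemidef.submatrix h Sum.inl

theorem fromBlocks_diagonal_nonneg {𝕜 m n : Type*} [RCLike 𝕜] [Finite m] [Finite n]
    {A : Matrix m m 𝕜} {D : Matrix n n 𝕜} (hA : 0 ≤ A) (hD : 0 ≤ D) :
    0 ≤ fromBlocks A 0 0 D := by
  classical
  cases nonempty_fintype m
  cases nonempty_fintype n
  obtain ⟨K, rfl⟩ := CStarAlgebra.nonneg_iff_eq_star_mul_self.1 hA
  obtain ⟨L, rfl⟩ := CStarAlgebra.nonneg_iff_eq_star_mul_self.1 hD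
  simpa [star_eq_conjTranspose, fromBlocks_conjTranspose, fromBlocks_multiply] using
    star_mul_self_nonneg (fromBlocks K 0 0 L)

theorem fromBlocks_le_fromBlocks_diagonal {𝕜 m n : Type*} [RCLike 𝕜] [Fintype m] [DecidableEq m]
    [Finite n] (P : Matrix m m 𝕜) (R : Matrix m n 𝕜) (Q : Matrix n n 𝕜) {ε : ℝ} (hε : 0 < ε) :
    fromBlocks P R Rᴴ Q ≤ fromBlocks (P + ε • 1) 0 0 (Q + ε⁻¹ • (Rᴴ * R)) := by
  -- With `K = [ε, -R]`, the difference of the two sides is `ε⁻¹ • (Kᴴ * K)`.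
  have hsq := (posSemidef_conjTranspose_mul_self
    (fromCols (ε • (1 : Matrix m m 𝕜)) (-R))).smul (inv_nonneg.2 hε.le)
  rw [conjTranspose_fromCols_eq_fromRows_conjTranspose, fromRows_mul_fromCols] at hsq
  rw [Matrix.le_iff]
  convert hsq using 1
  simp [fromBlocks_smul, sub_eq_add_neg, fromBlocks_neg, fromBlocks_add, smul_smul, hε.ne']

variable {𝕜 m n : Type*} [RCLike 𝕜] [Fintype m] [Fintype n] [DecidableEq m] [DecidableEq n]

theorem aeval_fromBlocks_diagonal (A : Matrix m m 𝕜) (D : Matrix n n 𝕜) (p : Polynomial ℝ) :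
    Polynomial.aeval (fromBlocks A 0 0 D) p =
      fromBlocks (Polynomial.aeval A p) 0 0 (Polynomial.aeval D p) := by
  induction p using Polynomial.induction_on' with
  | add p q hp hq => simp [hp, hq, fromBlocks_add]
  | monomial k a =>
    simp only [Polynomial.aeval_monomial, fromBlocks_diagonal_pow, Algebra.algebraMap_eq_smul_one,
      smul_mul_assoc, one_mul, fromBlocks_smul, smul_zero]

theorem cfc_fromBlocks_diagonal (f : ℝ → ℝ) {A : Matrix m m 𝕜} {D : Matrix n n 𝕜}
    (hA : A.IsHermitian) (hD : D.IsHermitian) :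
    cfc f (fromBlocks A 0 0 D) = fromBlocks (cfc f A) 0 0 (cfc f D) := by
  have hAD : (fromBlocks A 0 0 D).IsHermitian := hA.fromBlocks (by simp) hD
  obtain ⟨p, hp⟩ := exists_polynomial_eqOn_eval f <|
    ((finite_real_spectrum (A := A)).union (finite_real_spectrum (A := D))).union
      (finite_real_spectrum (A := fromBlocks A 0 0 D))
  rw [cfc_congr (hp.mono fun x hx ↦ .inl (.inl hx)), cfc_congr (hp.mono fun x hx ↦ .inl (.inr hx)),
    cfc_congr (hp.mono fun x hx ↦ .inr hx), cfc_polynomial p A hA.isSelfAdjoint,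
    cfc_polynomial p D hD.isSelfAdjoint, cfc_polynomial p _ hAD.isSelfAdjoint,
    aeval_fromBlocks_diagonal]

/-- The rotation `[[α, β], [-β, α]]` with scalar blocks, unitary when `α ^ 2 + β ^ 2 = 1`.
Conjugating `X ⊕ Y` by it puts the convex combination `α ^ 2 • X + β ^ 2 • Y` in a corner. -/
def blockRotation (n 𝕜 : Type*) [RCLike 𝕜] [DecidableEq n] (α β : ℝ) :
    Matrix (n ⊕ n) (n ⊕ n) 𝕜 :=
  fromBlocks (α • 1) (β • 1) (-(β • 1)) (α • 1)

theorem blockRotation_mem_unitary {α β : ℝ} (h : α ^ 2 + β ^ 2 = 1) :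
    blockRotation n 𝕜 α β ∈ unitary (Matrix (n ⊕ n) (n ⊕ n) 𝕜) := by
  have hαβ : α * α + β * β = 1 := by linarith
  have hβα : β * β + α * α = 1 := by linarith
  constructor <;>
    simp [blockRotation, star_eq_conjTranspose, fromBlocks_conjTranspose, fromBlocks_multiply,
      smul_smul, ← add_smul, mul_comm β α, hαβ, hβα]

theorem blockRotation_conj_fromBlocks_diagonal (α β : ℝ) (X Y : Matrix n n 𝕜) :
    blockRotation n 𝕜 α β * fromBlocks X 0 0 Y * star (blockRotation n 𝕜 α β) =
      fromBlocks (α ^ 2 • X + β ^ 2 • Y) ((α * β) • (Y - X)) ((α * β) • (Y - X))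
        (β ^ 2 • X + α ^ 2 • Y) := by
  simp only [blockRotation, star_eq_conjTranspose, fromBlocks_conjTranspose, fromBlocks_multiply,
    conjTranspose_smul, conjTranspose_neg, conjTranspose_one, star_trivial, smul_mul_assoc,
    mul_smul_comm, one_mul, mul_one, mul_zero, zero_add, add_zero, neg_mul, mul_neg, fromBlocks_inj]
  refine ⟨?_, ?_, ?_, ?_⟩ <;> module

theorem cfc_unitary_conj (f : ℝ → ℝ) {A : Matrix n n 𝕜} (hA : IsSelfAdjoint A)
    (U : unitary (Matrix n n 𝕜)) :
    cfc f (U * A * star U) = U * cfc f A * star U := by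
  have hcont : Continuous (Unitary.conjStarAlgAut ℝ (Matrix n n 𝕜) U) := by
    change Continuous fun X : Matrix n n 𝕜 ↦ U * X * star U
    fun_prop
  exact (StarAlgHomClass.map_cfc (Unitary.conjStarAlgAut ℝ (Matrix n n 𝕜) U) f A
    (finite_real_spectrum.continuousOn f) hcont hA (hA.map _)).symm

end Blocks

theorem add_mul_inv_add_inv_mul_add {R n : Type*} [CommRing R] [Fintype n] [DecidableEq n]
    {A B : Matrix n n R} (hA : IsUnit A) (hB : IsUnit B) :
    (A + B) * (A⁻¹ + B⁻¹) * (A + B) = A * B⁻¹ * A + B * A⁻¹ * B + 3 • (A + B) := by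
  have hA' : IsUnit A.det := hA.map detMonoidHom
  have hB' : IsUnit B.det := hB.map detMonoidHom
  simp only [add_mul, mul_add, mul_nonsing_inv _ hA', mul_nonsing_inv _ hB', one_mul,
    nonsing_inv_mul_cancel_right _ _ hA', nonsing_inv_mul_cancel_right _ _ hB']
  module

section ConjInverse

variable {𝕜 n : Type*} [RCLike 𝕜] [Fintype n] [DecidableEq n] {A B X Y : Matrix n n 𝕜}

theorem mul_inv_mul_nonneg (hB : B.PosDef) (hX : 0 ≤ X) (hY : 0 ≤ Y)
    (hXY : X * B⁻¹ * Y = Y * B⁻¹ * X) : 0 ≤ X * B⁻¹ * Y := by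
  set R := CFC.sqrt B⁻¹
  have hB' : 0 ≤ B⁻¹ := hB.inv.posSemidef.nonneg
  have hRR : R * R = B⁻¹ := CFC.sqrt_mul_sqrt_self _ hB'
  have hR : star R = R := (IsSelfAdjoint.of_nonneg (CFC.sqrt_nonneg _)).star_eq
  have hRunit : IsUnit R := isUnit_of_mul_isUnit_left (hRR ▸ hB.inv.isUnit)
  have hconj (V W : Matrix n n 𝕜) :
      (star R * V * R) * (star R * W * R) = star R * (V * B⁻¹ * W) * R := by
    simp only [hR, ← hRR, Matrix.mul_assoc]
  have hcomm : Commute (star R * X * R) (star R * Y * R) := by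
    rw [Commute, SemiconjBy, hconj, hconj, hXY]
  have hnonneg : 0 ≤ star R * (X * B⁻¹ * Y) * R := hconj X Y ▸
    hcomm.mul_nonneg (star_left_conjugate_nonneg hX R) (star_left_conjugate_nonneg hY R)
  rwa [nonneg_iff_posSemidef, hRunit.posSemidef_star_left_conjugate_iff,
    ← nonneg_iff_posSemidef] at hnonneg

theorem mul_inv_mul_add_smul_le (hB : B.PosDef) {p q : ℝ} (hp : p • B ≤ A) (hq : A ≤ q • B) :
    A * B⁻¹ * A + (p * q) • B ≤ (p + q) • A := by
  have hdet : IsUnit B.det := hB.isUnit.map detMonoidHom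
  have hexpand (u v : ℝ) :
      (A - u • B) * B⁻¹ * (v • B - A) = (u + v) • A - (A * B⁻¹ * A + (u * v) • B) := by
    simp only [sub_mul, mul_sub, smul_mul_assoc, mul_smul_comm, mul_nonsing_inv _ hdet,
      nonsing_inv_mul_cancel_right _ _ hdet, one_mul]
    module
  have hcomm : (A - p • B) * B⁻¹ * (q • B - A) = (q • B - A) * B⁻¹ * (A - p • B) :=
    calc (A - p • B) * B⁻¹ * (q • B - A)
        = (A - q • B) * B⁻¹ * (p • B - A) := by
          rw [hexpand, hexpand, add_comm p, mul_comm p]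
      _ = (q • B - A) * B⁻¹ * (A - p • B) := by
          rw [← neg_sub (q • B) A, ← neg_sub A (p • B), neg_mul, neg_mul_neg]
  rw [← sub_nonneg, ← hexpand]
  exact mul_inv_mul_nonneg hB (sub_nonneg.2 hp) (sub_nonneg.2 hq) hcomm

theorem inv_add_inv_le (hA : A.PosDef) (hB : B.PosDef) {p q : ℝ} (hpq : p * q = 1) (hp : 0 < p)
    (hpA : p • A ≤ B) (hqA : B ≤ q • A) : A⁻¹ + B⁻¹ ≤ (p + q + 2) • (A + B)⁻¹ := by
  have hq : 0 < q := pos_of_mul_pos_right (hpq ▸ one_pos) hp.le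
  have hpB : p • B ≤ A := by
    simpa [smul_smul, hpq] using smul_le_smul_of_nonneg_left hqA hp.le
  have hqB : A ≤ q • B := by
    simpa [smul_smul, mul_comm q p, hpq] using smul_le_smul_of_nonneg_left hpA hq.le
  have hsum : A * B⁻¹ * A + B * A⁻¹ * B + (A + B) ≤ (p + q) • (A + B) := by
    have hadd := add_le_add (mul_inv_mul_add_smul_le hB hpB hqB)
      (mul_inv_mul_add_smul_le hA hpA hqA)
    rw [hpq, one_smul, one_smul] at hadd
    convert hadd using 1 <;> module
  have hconj : (A + B) * (A⁻¹ + B⁻¹) * (A + B) ≤ (p + q + 2) • (A + B) := by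
    rw [add_mul_inv_add_inv_mul_add hA.isUnit hB.isUnit]
    convert add_le_add_left hsum ((2 : ℝ) • (A + B)) using 1 <;> module
  have hAB := hA.add hB
  have hdet : IsUnit (A + B).det := hAB.isUnit.map detMonoidHom
  have hinv : star (A + B)⁻¹ = (A + B)⁻¹ := hAB.inv.isHermitian.isSelfAdjoint.star_eq
  have hscaled := star_left_conjugate_le_conjugate hconj (A + B)⁻¹
  rwa [hinv, Matrix.mul_assoc (A + B), nonsing_inv_mul_cancel_left _ _ hdet,
    mul_nonsing_inv_cancel_right _ _ hdet, mul_smul_comm, nonsing_inv_mul _ hdet, smul_mul_assoc,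
    one_mul] at hscaled

end ConjInverse

section Means

theorem inv_le_inv_of_posDef {n : Type*} [Fintype n] [DecidableEq n] {A B : Matrix n n ℂ}
    (hA : A.PosDef) (hAB : A ≤ B) : B⁻¹ ≤ A⁻¹ := by
  have hB : B.PosDef := by simpa using hA.add_posSemidef hAB
  simpa only [nonsing_inv_eq_ringInverse] using CStarAlgebra.antitoneOn_ringInverse
    (isStrictlyPositive_iff_posDef.2 hA) (isStrictlyPositive_iff_posDef.2 hB) hAB

variable {n : Type} [Fintype n] [DecidableEq n] {A B A' : Matrix n n ℂ}

theorem hmean_posDef (hA : A.PosDef) (hB : B.PosDef) : (hmean A B).PosDef :=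
  ((hA.inv.add hB.inv).smul (by norm_num)).inv

theorem hmean_le_hmean_left (hA : A.PosDef) (hB : B.PosDef) (h : A ≤ A') :
    hmean A B ≤ hmean A' B := by
  have hA' : A'.PosDef := by simpa using hA.add_posSemidef h
  refine inv_le_inv_of_posDef ((hA'.inv.add hB.inv).smul (by norm_num)) ?_
  gcongr
  exact inv_le_inv_of_posDef hA h

theorem amean_le_smul_hmean (hA : A.PosDef) (hB : B.PosDef) {p q : ℝ} (hpq : p * q = 1)
    (hp : 0 < p) (hpA : p • A ≤ B) (hqA : B ≤ q • A) :
    amean A B ≤ ((p + q + 2) / 4) • hmean A B := by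
  have hq : 0 < q := pos_of_mul_pos_right (hpq ▸ one_pos) hp.le
  have hdet : IsUnit (A + B).det := (hA.add hB).isUnit.map detMonoidHom
  have hhalf : (2 : ℝ)⁻¹ • (A⁻¹ + B⁻¹) ≤ ((p + q + 2) / 2) • (A + B)⁻¹ := by
    convert smul_le_smul_of_nonneg_left (inv_add_inv_le hA hB hpq hp hpA hqA)
      (by norm_num : (0 : ℝ) ≤ 2⁻¹) using 1
    module
  have hinv : (((p + q + 2) / 2) • (A + B)⁻¹)⁻¹ = (2 / (p + q + 2)) • (A + B) := by
    refine inv_eq_right_inv ?_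
    rw [smul_mul_smul_comm, nonsing_inv_mul _ hdet, div_mul_div_cancel₀ two_ne_zero,
      div_self (by positivity), one_smul]
  calc amean A B = ((p + q + 2) / 4) • (((p + q + 2) / 2) • (A + B)⁻¹)⁻¹ := by
        rw [hinv, smul_smul, amean]
        congr 1
        field_simp
        norm_num
    _ ≤ ((p + q + 2) / 4) • hmean A B := by
        refine smul_le_smul_of_nonneg_left (inv_le_inv_of_posDef ?_ hhalf) (by positivity)
        exact (hA.inv.add hB.inv).smul (by norm_num)

theorem amean_smul_le_smul_hmean (hA : A.PosDef) (hB : B.PosDef) {s t : ℝ} (hs : 0 < s)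
    (ht : 0 < t) (hst : √(s * t) ≤ 1) (hsA : s • A ≤ B) (htA : B ≤ t • A) :
    amean (√(s * t) • A) B ≤ ((√s + √t) ^ 2 / (4 * √(s * t))) • hmean A B := by
  have hg : 0 < √(s * t) := by positivity
  have hsq : √(s * t) ^ 2 = s * t := Real.sq_sqrt (by positivity)
  have hpq : s / √(s * t) * (t / √(s * t)) = 1 := by field_simp; exact hsq.symm
  have hconst : (s / √(s * t) + t / √(s * t) + 2) / 4 = (√s + √t) ^ 2 / (4 * √(s * t)) := by
    rw [add_sq, Real.sq_sqrt hs.le, Real.sq_sqrt ht.le, mul_assoc 2, ← Real.sqrt_mul hs.le]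
    field_simp
    ring
  have hgA : √(s * t) • A ≤ A := smul_le_of_le_one_left hA.posSemidef.nonneg hst
  calc amean (√(s * t) • A) B
      ≤ ((√s + √t) ^ 2 / (4 * √(s * t))) • hmean (√(s * t) • A) B := by
        rw [← hconst]
        refine amean_le_smul_hmean (hA.smul hg) hB hpq (by positivity) ?_ ?_ <;>
          rwa [smul_smul, div_mul_cancel₀ _ hg.ne']
    _ ≤ ((√s + √t) ^ 2 / (4 * √(s * t))) • hmean A B := by
        gcongr
        exact hmean_le_hmean_left (hA.smul hg) hB hgA

end Means

namespace OpMonotone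

variable {f : ℝ → ℝ} {n : Type} [Fintype n] [DecidableEq n] {X Y : Matrix n n ℂ}

theorem cfc_nonneg (hf : OpMonotone f) (hX : 0 ≤ X) : 0 ≤ cfc f X :=
  _root_.cfc_nonneg fun _ hx ↦ hf.2.1 _ (spectrum_nonneg_of_nonneg hX hx)

theorem cfc_mono (hf : OpMonotone f) (hX : 0 ≤ X) (hXY : X ≤ Y) : cfc f X ≤ cfc f Y :=
  hf.2.2 n X Y (nonneg_iff_posSemidef.1 hX) hXY

theorem smul_cfc_add_smul_cfc_le_cfc_add_smul_one (hf : OpMonotone f) (hX : 0 ≤ X)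
    (hY : 0 ≤ Y) {α β ε : ℝ} (hαβ : α ^ 2 + β ^ 2 = 1) (hε : 0 < ε) :
    α ^ 2 • cfc f X + β ^ 2 • cfc f Y ≤ cfc f (α ^ 2 • X + β ^ 2 • Y + ε • 1) := by
  set P := α ^ 2 • X + β ^ 2 • Y
  set Q := β ^ 2 • X + α ^ 2 • Y
  set R := (α * β) • (Y - X)
  have hX' := IsSelfAdjoint.of_nonneg hX
  have hY' := IsSelfAdjoint.of_nonneg hY
  have hR : Rᴴ = R := (IsSelfAdjoint.all (α * β)).smul (hY'.sub hX')
  have hP : 0 ≤ P := by positivity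
  have hQ : 0 ≤ Q := by positivity
  let U : unitary (Matrix (n ⊕ n) (n ⊕ n) ℂ) := ⟨_, blockRotation_mem_unitary hαβ⟩
  have hrotate : U * fromBlocks X 0 0 Y * star U = fromBlocks P R R Q :=
    blockRotation_conj_fromBlocks_diagonal α β X Y
  have hXY : 0 ≤ fromBlocks X 0 0 Y := fromBlocks_diagonal_nonneg hX hY
  have hPQ : fromBlocks P R R Q ≤ fromBlocks (P + ε • 1) 0 0 (Q + ε⁻¹ • (Rᴴ * R)) := by
    simpa only [hR] using fromBlocks_le_fromBlocks_diagonal P R Q hε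
  have hPε : IsSelfAdjoint (P + ε • 1) := .of_nonneg (add_nonneg hP (smul_nonneg hε.le zero_le_one))
  have hQε : IsSelfAdjoint (Q + ε⁻¹ • (Rᴴ * R)) :=
    .of_nonneg (add_nonneg hQ (smul_nonneg (by positivity) (star_mul_self_nonneg R)))
  calc α ^ 2 • cfc f X + β ^ 2 • cfc f Y
      = (U * cfc f (fromBlocks X 0 0 Y) * star U : Matrix (n ⊕ n) (n ⊕ n) ℂ).toBlocks₁₁ := by
        rw [cfc_fromBlocks_diagonal f hX' hY']
        exact (congrArg toBlocks₁₁ (blockRotation_conj_fromBlocks_diagonal α β _ _)).symm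
    _ = (cfc f (fromBlocks P R R Q)).toBlocks₁₁ := by
        rw [← cfc_unitary_conj f (.of_nonneg hXY), hrotate]
    _ ≤ (cfc f (fromBlocks (P + ε • 1) 0 0 (Q + ε⁻¹ • (Rᴴ * R)))).toBlocks₁₁ :=
        toBlocks₁₁_mono (hf.cfc_mono (hrotate ▸ star_right_conjugate_nonneg hXY U.1) hPQ)
    _ = cfc f (P + ε • 1) := by rw [cfc_fromBlocks_diagonal f hPε hQε, toBlocks_fromBlocks₁₁]

theorem concaveOn_cfc (hf : OpMonotone f) : ConcaveOn ℝ (Set.Ici (0 : Matrix n n ℂ)) (cfc f) := by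
  refine ⟨convex_Ici 0, fun X hX Y hY a b ha hb hab ↦ ?_⟩
  have hXY : a • X + b • Y ∈ Set.Ici 0 := convex_Ici 0 hX hY ha hb hab
  have hmaps : Set.MapsTo (fun ε : ℝ ↦ a • X + b • Y + ε • 1) (Set.Ici 0) (Set.Ici 0) :=
    fun ε hε ↦ Set.mem_Ici.2 (add_nonneg hXY (smul_nonneg hε zero_le_one))
  have hcont : ContinuousOn (fun ε : ℝ ↦ cfc f (a • X + b • Y + ε • 1)) (Set.Ici 0) :=
    (continuousOn_cfc_Ici hf.1).comp (by fun_prop) hmaps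
  have hlim : Tendsto (fun ε : ℝ ↦ cfc f (a • X + b • Y + ε • 1)) (𝓝[>] 0)
      (𝓝 (cfc f (a • X + b • Y))) := by
    simpa [ContinuousWithinAt] using (hcont 0 Set.self_mem_Ici).mono Set.Ioi_subset_Ici_self
  refine ge_of_tendsto hlim (eventually_mem_nhdsWithin.mono fun ε hε ↦ ?_)
  simpa [Real.sq_sqrt ha, Real.sq_sqrt hb] using hf.smul_cfc_add_smul_cfc_le_cfc_add_smul_one hX hY
    (α := √a) (β := √b) (by simpa [Real.sq_sqrt ha, Real.sq_sqrt hb]) hε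

theorem cfc_smul_le (hf : OpMonotone f) (hX : 0 ≤ X) {c : ℝ} (hc : 1 ≤ c) :
    cfc f (c • X) ≤ c • cfc f X := by
  have hc₀ : 0 < c := by linarith
  have hconc := hf.concaveOn_cfc.2 (smul_nonneg hc₀.le hX) (Set.self_mem_Ici (a := 0))
    (inv_nonneg.2 hc₀.le) (sub_nonneg.2 (inv_le_one_of_one_le₀ hc)) (by ring)
  have hzero : 0 ≤ (1 - c⁻¹) • cfc f (0 : Matrix n n ℂ) :=
    smul_nonneg (sub_nonneg.2 (inv_le_one_of_one_le₀ hc)) (hf.cfc_nonneg le_rfl)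
  have hle : c⁻¹ • cfc f (c • X) ≤ cfc f X := by
    simpa [smul_smul, hc₀.ne'] using (le_add_of_nonneg_right hzero).trans hconc
  simpa [smul_smul, hc₀.ne'] using smul_le_smul_of_nonneg_left hle hc₀.le

theorem amean_cfc_le_cfc_amean (hf : OpMonotone f) (hX : 0 ≤ X) (hY : 0 ≤ Y) :
    amean (cfc f X) (cfc f Y) ≤ cfc f (amean X Y) := by
  simpa only [amean, smul_add] using
    hf.concaveOn_cfc.2 hX hY (by norm_num) (by norm_num) (by norm_num)

theorem amean_cfc_le_smul_cfc_hmean (hf : OpMonotone f) {A B : Matrix n n ℂ} (hA : A.PosDef)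
    (hB : B.PosDef) {s t : ℝ} (hs : 0 < s) (ht : 0 < t) (hst : √(s * t) ≤ 1) (hsA : s • A ≤ B)
    (htA : B ≤ t • A) :
    amean (cfc f (√(s * t) • A)) (cfc f B) ≤
      ((√s + √t) ^ 2 / (4 * √(s * t))) • cfc f (hmean A B) := by
  have hgA : 0 ≤ √(s * t) • A := smul_nonneg (Real.sqrt_nonneg _) hA.posSemidef.nonneg
  have hB₀ : 0 ≤ B := hB.posSemidef.nonneg
  have hconst : 1 ≤ (√s + √t) ^ 2 / (4 * √(s * t)) := by
    rw [one_le_div (by positivity), Real.sqrt_mul hs.le, ← mul_assoc]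
    exact four_mul_le_sq_add _ _
  calc amean (cfc f (√(s * t) • A)) (cfc f B)
      ≤ cfc f (amean (√(s * t) • A) B) := hf.amean_cfc_le_cfc_amean hgA hB₀
    _ ≤ cfc f (((√s + √t) ^ 2 / (4 * √(s * t))) • hmean A B) :=
        hf.cfc_mono (smul_nonneg (by norm_num) (add_nonneg hgA hB₀))
          (amean_smul_le_smul_hmean hA hB hs ht hst hsA htA)
    _ ≤ ((√s + √t) ^ 2 / (4 * √(s * t))) • cfc f (hmean A B) :=
        hf.cfc_smul_le (hmean_posDef hA hB).posSemidef.nonneg hconst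

end OpMonotone

end

theorem diaz_metcalf_sqrt_st_le_one {n m : Type} [Fintype n] [DecidableEq n] [Fintype m] [DecidableEq m]
    (Φ : Matrix n n ℂ →ₗ[ℂ] Matrix m m ℂ)
    (hΦ : ∀ X : Matrix n n ℂ, X.PosSemidef → (Φ X).PosSemidef)
    (f : ℝ → ℝ) (hf : OpMonotone f)
    (A B : Matrix n n ℂ) (hA : A.PosDef) (hB : B.PosDef)
    (s t : ℝ) (hs : 0 < s) (hst : s ≤ t) (h1 : Real.sqrt (s * t) ≤ 1)
    (hsA : LoewnerLE (s • A) B) (htA : LoewnerLE B (t • A)) :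
    LoewnerLE ((2 : ℝ)⁻¹ • (Φ (cfc f (Real.sqrt (s * t) • A)) + Φ (cfc f B)))
      (((Real.sqrt s + Real.sqrt t) ^ 2 / (4 * Real.sqrt (s * t))) • Φ (cfc f (hmean A B))) := by
  have hmain := hf.amean_cfc_le_smul_cfc_hmean hA hB hs (hs.trans_le hst) h1 hsA htA
  simpa only [LoewnerLE, amean, map_sub, map_add, LinearMap.map_smul_of_tower] using hΦ _ hmain
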